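/- arXiv:1408.1597 — 3 statements merged into one kernel-verified Lean document; each statement's English description precedes it below -/
import Mathlib

section
/- For all nonnegative integers n and k, the overpartition number satisfies p̄(4^k(8n+7)) ≡ 0 (mod 64). -/
/-!
Write `φ = ∑_{j ∈ ℤ} (-1)^j X^{j²} = 1 + 2θ` with `θ = ∑_{j ≥ 1} (-1)^j X^{j²}`.  Gauss's identity
`∏ (1 - X^i) / (1 + X^i) = φ` says that the generating function `G` of overpartitions is `1 / φ`, so
`G ≡ 1 - 2θ + 4θ² - 8θ³ + 16θ⁴ - 32θ⁵ (mod 64)`.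

Let `N = 4^k (8n + 7)`.  It is not a sum of three squares, so `θ`, `θ²`, `θ³` have no term in `X^N`.
Since a square of a sum is the sum of the squares modulo 2,
`θ⁴ ≡ (∑ X^{2j²})² (mod 4)` and `θ⁵ ≡ θ ∑ X^{4j²} (mod 2)`. A term in `X^N` on the right would give
`N = 2a² + 2b² = (a + b)² + (a - b)²` or `N = a² + (2b)²`, which is again impossible. Hence the
coefficient of `X^N` in `G` is divisible by 64 (`coeff_dvd_of_inverse_theta`).

Gauss's identity is only needed modulo `X^L`, for products truncated at `M ≥ L`
(`gauss_truncated`).  The argument is a special case of the Rogers–Fine recurrence: the sums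
`H_k = ∑_n q^{kn} (q^k; q)_n / (-q^k; q)_{n+1}` satisfy `H_k = 1 - q^{2k+1} H_{k+1}`, because the
terms of `H_k + q^{2k+1} H_{k+1}` telescope (`sum_fineTerm_add`), while
`∏ (1 - q^i) / (1 + q^i) = 1 - 2 q H_1` (`prod_eq_one_sub_fineSum`). Iterating the recurrence
produces the exponents `1, 1 + 3, 1 + 3 + 5, …`.
-/

/-- The number of overpartitions of `n`: pairs `(μ, λ)` where `μ` is a partition of some
`m ≤ n` into distinct parts and `λ` is a partition of `n - m`. -/
def overpartition (n : ℕ) : ℕ :=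
  ∑ m ∈ Finset.range (n + 1),
    (Nat.Partition.distincts m).card * Fintype.card (Nat.Partition (n - m))

open PowerSeries Finset

/-! ### Gauss's identity modulo a power of `q` -/

section Gauss

variable {R : Type*} [CommRing R]

/-- The term `q^{kn} (q^k; q)_n / (-q^k; q)_{n+1}`, where `v j` plays the role of `1 / (1 + q^j)`. -/
def fineTerm (q : R) (v : ℕ → R) (k n : ℕ) : R :=
  q ^ (k * n) * (∏ i ∈ range n, (1 - q ^ (k + i))) * ∏ i ∈ range (n + 1), v (k + i)

/-- The telescoping sum behind `H_k = 1 - q^{2k+1} H_{k+1}`; the last product is the remainder,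
which is a multiple of `q^{k(n+1)}`. -/
lemma sum_fineTerm_add (q : R) (v : ℕ → R) (hv : ∀ j, 1 ≤ j → (1 + q ^ j) * v j = 1)
    (k : ℕ) (hk : 1 ≤ k) (n : ℕ) :
    ∑ i ∈ range (n + 1), (fineTerm q v k i + q ^ (2 * k + 1) * fineTerm q v (k + 1) i) =
      1 - q ^ (k * (n + 1)) * ((1 - q ^ (2 * k + n + 1)) *
        (∏ i ∈ range n, (1 - q ^ (k + 1 + i))) * ∏ i ∈ range (n + 2), v (k + i)) := by
  induction n with
  | zero =>
    have h1 := hv k hk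
    have h2 := hv (k + 1) (by omega)
    simp [fineTerm, prod_range_succ]
    linear_combination (q ^ k * v k) * h2 + (1 - q ^ (2 * k + 1) * v (k + 1)) * h1
  | succ m ih =>
    rw [sum_range_succ, ih]
    have h1 := hv k hk
    have h2 := hv (k + m + 2) (by omega)
    have e1 : ∏ i ∈ range (m + 1), (1 - q ^ (k + i)) =
        (1 - q ^ k) * ∏ i ∈ range m, (1 - q ^ (k + 1 + i)) := by
      rw [prod_range_succ', mul_comm]
      simp [add_comm, add_left_comm]
    have e2 : ∏ i ∈ range (m + 2), v (k + 1 + i) =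
        (∏ i ∈ range (m + 2), v (k + i)) * v (k + m + 2) * (1 + q ^ k) := by
      have h : (∏ i ∈ range (m + 2), v (k + 1 + i)) * v k =
          (∏ i ∈ range (m + 2), v (k + i)) * v (k + m + 2) := by
        have := (prod_range_succ' (fun i => v (k + i)) (m + 2)).symm.trans
          (prod_range_succ (fun i => v (k + i)) (m + 2))
        simpa [add_assoc, add_comm, add_left_comm] using this
      rw [← h]
      linear_combination (-(∏ i ∈ range (m + 2), v (k + 1 + i))) * h1
    have e3 : ∏ i ∈ range (m + 1), (1 - q ^ (k + 1 + i)) =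
        (∏ i ∈ range m, (1 - q ^ (k + 1 + i))) * (1 - q ^ (k + 1 + m)) := prod_range_succ _ _
    have e4 : ∏ i ∈ range (m + 1 + 2), v (k + i) =
        (∏ i ∈ range (m + 2), v (k + i)) * v (k + m + 2) := prod_range_succ _ _
    simp only [fineTerm]
    rw [e1, e2, e3, e4]
    generalize ∏ i ∈ range m, (1 - q ^ (k + 1 + i)) = W
    generalize ∏ i ∈ range (m + 1 + 1), v (k + i) = V
    generalize v (k + m + 2) = w at *
    have p1 : q ^ ((k + 1) * (m + 1)) = q ^ (k * (m + 1)) * (q ^ m * q) := by ring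
    have p2 : q ^ (k * (m + 1 + 1)) = q ^ (k * (m + 1)) * q ^ k := by ring
    have p3 : q ^ (2 * k + 1) = (q ^ k) ^ 2 * q := by ring
    have p4 : q ^ (2 * k + m + 1) = (q ^ k) ^ 2 * (q ^ m * q) := by ring
    have p5 : q ^ (2 * k + (m + 1) + 1) = (q ^ k) ^ 2 * (q ^ m * q) * q := by ring
    have p6 : q ^ (k + 1 + m) = q ^ k * (q ^ m * q) := by ring
    have p7 : q ^ (k + m + 2) = q ^ k * (q ^ m * q) * q := by ring
    rw [p7] at h2
    rw [p1, p2, p3, p4, p5, p6]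
    generalize q ^ (k * (m + 1)) = Z
    generalize q ^ m = y at *
    generalize q ^ k = x at *
    linear_combination (-(Z * W * V * (x ^ 2 * (y * q) - x))) * h2

lemma fineSum_recurrence (q : R) (v : ℕ → R) (hv : ∀ j, 1 ≤ j → (1 + q ^ j) * v j = 1)
    (k : ℕ) (hk : 1 ≤ k) (M : ℕ) :
    q ^ M ∣ ∑ i ∈ range M, fineTerm q v k i -
      (1 - q ^ (2 * k + 1) * ∑ i ∈ range M, fineTerm q v (k + 1) i) := by
  cases M with
  | zero => simp
  | succ n =>
    have h := sum_fineTerm_add q v hv k hk n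
    rw [sum_add_distrib, ← mul_sum] at h
    have hle : n + 1 ≤ k * (n + 1) := Nat.le_mul_of_pos_left _ hk
    refine (pow_dvd_pow q hle).trans ?_
    exact ⟨-((1 - q ^ (2 * k + n + 1)) *
      (∏ i ∈ range n, (1 - q ^ (k + 1 + i))) * ∏ i ∈ range (n + 2), v (k + i)),
      by linear_combination h⟩

lemma prod_eq_one_sub_fineSum (q : R) (v : ℕ → R) (hv : ∀ j, 1 ≤ j → (1 + q ^ j) * v j = 1)
    (M : ℕ) :
    ∏ i ∈ range M, ((1 - q ^ (i + 1)) * v (i + 1)) =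
      1 - 2 * q * ∑ i ∈ range M, fineTerm q v 1 i := by
  induction M with
  | zero => simp
  | succ M ih =>
    have h := hv (M + 1) (by omega)
    rw [prod_range_succ, sum_range_succ, mul_add, ← sub_sub, ← ih]
    simp only [fineTerm, prod_range_succ _ M, prod_mul_distrib, one_mul, add_comm 1]
    generalize ∏ i ∈ range M, (1 - q ^ (i + 1)) = A
    generalize ∏ i ∈ range M, v (i + 1) = B
    linear_combination (A * B) * h

/-- Gauss's identity `∏ (1 - q^i) / (1 + q^i) = 1 + 2 ∑ (-1)^j q^{j²}` modulo `q^L`. -/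
lemma gauss_truncated (q : R) (v : ℕ → R) (hv : ∀ j, 1 ≤ j → (1 + q ^ j) * v j = 1)
    (L M : ℕ) (hLM : L ≤ M) :
    q ^ L ∣ ∏ i ∈ range M, ((1 - q ^ (i + 1)) * v (i + 1)) -
      (1 + 2 * ∑ j ∈ range L, (-1) ^ (j + 1) * q ^ ((j + 1) ^ 2)) := by
  have key : ∀ J : ℕ, q ^ L ∣ ∏ i ∈ range M, ((1 - q ^ (i + 1)) * v (i + 1)) -
      (1 + 2 * ∑ j ∈ range J, (-1) ^ (j + 1) * q ^ ((j + 1) ^ 2) +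
        2 * (-1) ^ (J + 1) * q ^ ((J + 1) ^ 2) * ∑ i ∈ range M, fineTerm q v (J + 1) i) := by
    intro J
    induction J with
    | zero =>
      rw [prod_eq_one_sub_fineSum q v hv M]
      convert dvd_zero _
      simp
      ring
    | succ J ih =>
      obtain ⟨c, hc⟩ := ih
      obtain ⟨d, hd⟩ := (pow_dvd_pow q hLM).trans
        (fineSum_recurrence q v hv (J + 1) (by omega) M)
      refine ⟨c + 2 * (-1) ^ (J + 1) * q ^ ((J + 1) ^ 2) * d, ?_⟩
      rw [sum_range_succ]
      have p : q ^ ((J + 1 + 1) ^ 2) = q ^ ((J + 1) ^ 2) * q ^ (2 * (J + 1) + 1) := by ring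
      rw [p, pow_succ (-1 : R) (J + 1)]
      linear_combination hc + 2 * (-1) ^ (J + 1) * q ^ ((J + 1) ^ 2) * hd
  have h2 : q ^ L ∣ 2 * (-1) ^ (L + 1) * q ^ ((L + 1) ^ 2) *
      ∑ i ∈ range M, fineTerm q v (L + 1) i := by
    have : q ^ L ∣ q ^ ((L + 1) ^ 2) := pow_dvd_pow q (by nlinarith)
    exact (this.mul_left _).mul_right _
  convert! dvd_add (key L) h2 using 1
  ring

end Gauss

/-! ### The generating function of overpartitions -/

section GeneratingFunction

open PowerSeries.WithPiTopology Filter Topology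

lemma overpartition_series_eq :
    (PowerSeries.mk fun n ↦ (overpartition n : ℤ)) =
      (PowerSeries.mk fun n ↦ (#(Nat.Partition.countRestricted n 2) : ℤ)) *
      (PowerSeries.mk fun n ↦ (#(Nat.Partition.restricted n fun _ ↦ True) : ℤ)) := by
  ext n
  rw [coeff_mul, Nat.sum_antidiagonal_eq_sum_range_succ_mk]
  simp [overpartition, Nat.Partition.countRestricted_two, Nat.Partition.restricted]

/-- The generating function of overpartitions is the inverse of `∑_{j ∈ ℤ} (-1)^j X^{j²}`,
modulo `X^L`. -/
lemma overpartition_series_mul (L : ℕ) :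
    (X : ℤ⟦X⟧) ^ L ∣ (PowerSeries.mk fun n ↦ (overpartition n : ℤ)) *
      (1 + 2 * ∑ j ∈ range L, (-1) ^ (j + 1) * X ^ ((j + 1) ^ 2)) - 1 := by
  set S : ℤ⟦X⟧ := 1 + 2 * ∑ j ∈ range L, (-1) ^ (j + 1) * X ^ ((j + 1) ^ 2) with hS
  have hP := (Nat.Partition.hasProd_powerSeriesMk_card_countRestricted ℤ (m := 2) (by norm_num)).mul
    (Nat.Partition.hasProd_powerSeriesMk_card_restricted ℤ (fun _ ↦ True))
  rw [← overpartition_series_eq] at hP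
  have hlim := ((hP.tendsto_prod_nat.mul_const S).sub_const 1)
  rw [tendsto_iff_coeff_tendsto] at hlim
  rw [X_pow_dvd_iff]
  intro m hm
  refine tendsto_nhds_unique (hlim m) (tendsto_atTop_of_eventually_const (i₀ := L) fun M hM ↦ ?_)
  refine X_pow_dvd_iff.1 ?_ m hm
  have hv : ∀ j, 1 ≤ j → (1 + (X : ℤ⟦X⟧) ^ j) * invOfUnit (1 + X ^ j) 1 = 1 := fun j hj ↦
    mul_invOfUnit _ _ (by simp [show j ≠ 0 by omega])
  obtain ⟨c, hc⟩ := gauss_truncated (X : ℤ⟦X⟧) (fun j ↦ invOfUnit (1 + X ^ j) 1) hv L M hM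
  rw [← hS] at hc
  -- the truncated product for overpartitions is the inverse of the one in Gauss's identity
  have hone : (∏ i ∈ range M, ((∑ j ∈ range 2, (X : ℤ⟦X⟧) ^ ((i + 1) * j)) *
      if True then ∑' j : ℕ, X ^ ((i + 1) * j) else 1)) *
      ∏ i ∈ range M, ((1 - X ^ (i + 1)) * invOfUnit (1 + (X : ℤ⟦X⟧) ^ (i + 1)) 1) = 1 := by
    rw [← prod_mul_distrib]
    refine prod_eq_one fun i _ ↦ ?_
    have h1 := hv (i + 1) (by omega)
    have h2 := tsum_pow_mul_one_sub_of_constantCoeff_eq_zero (f := (X : ℤ⟦X⟧) ^ (i + 1)) (by simp)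
    simp only [pow_mul, if_true, sum_range_succ, sum_range_zero, pow_zero, pow_one, zero_add]
    linear_combination h1 + (1 + X ^ (i + 1)) * invOfUnit (1 + (X : ℤ⟦X⟧) ^ (i + 1)) 1 * h2
  refine ⟨-(∏ i ∈ range M, ((∑ j ∈ range 2, (X : ℤ⟦X⟧) ^ ((i + 1) * j)) *
      if True then ∑' j : ℕ, X ^ ((i + 1) * j) else 1)) * c, ?_⟩
  linear_combination hone - (∏ i ∈ range M, ((∑ j ∈ range 2, (X : ℤ⟦X⟧) ^ ((i + 1) * j)) *
      if True then ∑' j : ℕ, X ^ ((i + 1) * j) else 1)) * hc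

end GeneratingFunction

/-! ### Arithmetic of `4^k (8n + 7)` and the expansion modulo 64 -/

lemma ne_sum_three_squares (n k : ℕ) (a b c : ℤ) :
    a ^ 2 + b ^ 2 + c ^ 2 ≠ 4 ^ k * (8 * n + 7) := by
  induction k generalizing a b c with
  | zero =>
    intro h
    have h8 : (a ^ 2 + b ^ 2 + c ^ 2) % 8 = 7 := by omega
    have sq : ∀ x : ℤ, x ^ 2 % 8 = 0 ∨ x ^ 2 % 8 = 1 ∨ x ^ 2 % 8 = 4 := by
      intro x
      have : x % 8 = 0 ∨ x % 8 = 1 ∨ x % 8 = 2 ∨ x % 8 = 3 ∨ x % 8 = 4 ∨ x % 8 = 5 ∨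
        x % 8 = 6 ∨ x % 8 = 7 := by omega
      rcases this with h | h | h | h | h | h | h | h <;> simp [pow_two, Int.mul_emod, h]
    have := sq a
    have := sq b
    have := sq c
    omega
  | succ k ih =>
    intro h
    rw [pow_succ (4 : ℤ)] at h
    have h4 : (a ^ 2 + b ^ 2 + c ^ 2) % 4 = 0 := by
      rw [h]
      exact Int.emod_eq_zero_of_dvd ⟨4 ^ k * (8 * n + 7), by ring⟩
    have sq : ∀ x : ℤ, (∃ y, x = 2 * y ∧ x ^ 2 % 4 = 0) ∨ x ^ 2 % 4 = 1 := by
      intro x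
      rcases Int.even_or_odd' x with ⟨y, rfl | rfl⟩
      · exact Or.inl ⟨y, rfl, by ring_nf; omega⟩
      · right; ring_nf; omega
    rcases sq a with ⟨a', rfl, ha⟩ | ha <;> rcases sq b with ⟨b', rfl, hb⟩ | hb <;>
      rcases sq c with ⟨c', rfl, hc⟩ | hc <;> try omega
    exact ih a' b' c' (by linarith)

lemma exists_sum_sq_eq {R ι : Type*} [CommRing R] (s : Finset ι) (a : ι → R) :
    ∃ E, (∑ i ∈ s, a i) ^ 2 = ∑ i ∈ s, a i ^ 2 + 2 * E := by
  classical
  induction s using Finset.induction_on with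
  | empty => exact ⟨0, by simp⟩
  | insert i s hi ih =>
    obtain ⟨E, hE⟩ := ih
    refine ⟨E + a i * ∑ j ∈ s, a j, ?_⟩
    rw [sum_insert hi, sum_insert hi]
    linear_combination hE

/-- A series that inverts `1 + 2 ∑ (-1)^j X^{j²}` modulo `X^{N+1}`, where `N = 4^k (8n + 7)`, has
coefficient at `X^N` divisible by 64: every summand of its expansion in powers of `2θ` either
has a factor 64 or has exponents that are sums of three squares. -/
lemma coeff_dvd_of_inverse_theta (n k : ℕ) (G : ℤ⟦X⟧)
    (hG : (X : ℤ⟦X⟧) ^ (4 ^ k * (8 * n + 7) + 1) ∣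
      G * (1 + 2 * ∑ j ∈ range (4 ^ k * (8 * n + 7) + 1), (-1) ^ (j + 1) * X ^ ((j + 1) ^ 2)) - 1) :
    64 ∣ coeff (4 ^ k * (8 * n + 7)) G := by
  have hN : ∀ a b c : ℤ, a ^ 2 + b ^ 2 + c ^ 2 ≠ ((4 ^ k * (8 * n + 7) : ℕ) : ℤ) := by
    intro a b c
    push_cast
    exact ne_sum_three_squares n k a b c
  have hN0 : 4 ^ k * (8 * n + 7) ≠ 0 := by positivity
  generalize 4 ^ k * (8 * n + 7) = N at *
  set r := range (N + 1)
  have hmon : ∀ j : ℕ, (-1) ^ (j + 1) * (X : ℤ⟦X⟧) ^ ((j + 1) ^ 2) =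
      monomial ((j + 1) ^ 2) ((-1) ^ (j + 1)) := by
    intro j
    rw [monomial_eq_C_mul_X_pow]
    simp
  simp only [hmon] at hG
  set a : ℕ → ℤ⟦X⟧ := fun j ↦ monomial ((j + 1) ^ 2) ((-1) ^ (j + 1)) with ha
  have ha2 : ∀ j, a j ^ 2 = monomial (2 * (j + 1) ^ 2) 1 := by
    intro j
    simp only [ha, pow_two (monomial _ _), monomial_mul_monomial, ← two_mul, ← mul_pow]
    simp
  have ha4 : ∀ j, (a j ^ 2) ^ 2 = monomial (4 * (j + 1) ^ 2) 1 := by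
    intro j
    rw [ha2, pow_two (monomial _ _), monomial_mul_monomial]
    congr 2
    ring
  set θ := ∑ j ∈ r, a j
  obtain ⟨c, hc⟩ := hG
  obtain ⟨E, hE⟩ := exists_sum_sq_eq r a
  obtain ⟨F, hF⟩ := exists_sum_sq_eq r (fun j ↦ a j ^ 2)
  change θ ^ 2 = _ at hE
  simp only [ha2] at hE hF
  simp only [← ha2, ha4] at hF
  simp only [ha2] at hF
  set B : ℤ⟦X⟧ := ∑ j ∈ r, monomial (2 * (j + 1) ^ 2) 1
  set C4 : ℤ⟦X⟧ := ∑ j ∈ r, monomial (4 * (j + 1) ^ 2) 1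
  have h4 : θ ^ 4 = B ^ 2 + 4 * (B * E + E ^ 2) := by
    linear_combination (θ ^ 2 + B + 2 * E) * hE
  have h5 : θ ^ 5 = θ * C4 + 2 * (θ * (F + 2 * (B * E + E ^ 2))) := by
    linear_combination θ * h4 + θ * hF
  have hexp : G = 1 - 2 * θ + 4 * θ ^ 2 - 8 * θ ^ 3 + 16 * B ^ 2 - 32 * (θ * C4) +
      64 * (B * E + E ^ 2 - θ * (F + 2 * (B * E + E ^ 2)) + θ ^ 6 * G) +
      X ^ (N + 1) * (c * (1 - 2 * θ + 4 * θ ^ 2 - 8 * θ ^ 3 + 16 * θ ^ 4 - 32 * θ ^ 5)) := by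
    linear_combination (1 - 2 * θ + 4 * θ ^ 2 - 8 * θ ^ 3 + 16 * θ ^ 4 - 32 * θ ^ 5) * hc +
      16 * h4 - 32 * h5
  have z0 : coeff N (1 : ℤ⟦X⟧) = 0 := by simp [coeff_one, hN0]
  have z1 : coeff N θ = 0 := by
    simp only [θ, ha, map_sum]
    refine sum_eq_zero fun i _ ↦ ?_
    rw [coeff_monomial, if_neg]
    intro h
    exact hN (i + 1) 0 0 (by rw [h]; push_cast; ring)
  have z2 : coeff N (θ ^ 2) = 0 := by
    simp only [θ, ha, pow_two (∑ j ∈ r, _), sum_mul_sum, map_sum, monomial_mul_monomial]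
    refine sum_eq_zero fun i _ ↦ sum_eq_zero fun j _ ↦ ?_
    rw [coeff_monomial, if_neg]
    intro h
    exact hN (i + 1) (j + 1) 0 (by rw [h]; push_cast; ring)
  have z3 : coeff N (θ ^ 3) = 0 := by
    simp only [θ, ha, pow_succ (∑ j ∈ r, _), pow_zero, one_mul, sum_mul, mul_sum, map_sum,
      monomial_mul_monomial]
    refine sum_eq_zero fun i _ ↦ sum_eq_zero fun j _ ↦ sum_eq_zero fun l _ ↦ ?_
    rw [coeff_monomial, if_neg]
    intro h
    exact hN (i + 1) (j + 1) (l + 1) (by rw [h]; push_cast; ring)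
  have z4 : coeff N (B ^ 2) = 0 := by
    simp only [B, pow_two (∑ j ∈ r, _), sum_mul_sum, map_sum, monomial_mul_monomial]
    refine sum_eq_zero fun i _ ↦ sum_eq_zero fun j _ ↦ ?_
    rw [coeff_monomial, if_neg]
    intro h
    -- `2x² + 2y² = (x + y)² + (x - y)²`
    exact hN (i + 1 + (j + 1)) (i + 1 - (j + 1)) 0 (by rw [h]; push_cast; ring)
  have z5 : coeff N (θ * C4) = 0 := by
    simp only [θ, C4, ha, sum_mul_sum, map_sum, monomial_mul_monomial]
    refine sum_eq_zero fun i _ ↦ sum_eq_zero fun j _ ↦ ?_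
    rw [coeff_monomial, if_neg]
    intro h
    exact hN (i + 1) (2 * (j + 1)) 0 (by rw [h]; push_cast; ring)
  have z6 : ∀ Z : ℤ⟦X⟧, coeff N (X ^ (N + 1) * Z) = 0 := fun Z ↦
    X_pow_dvd_iff.1 (Dvd.intro _ rfl) N (Nat.lt_succ_self N)
  have hmul : ∀ (m : ℕ) (Z : ℤ⟦X⟧), coeff N ((m : ℤ⟦X⟧) * Z) = m * coeff N Z := by
    intro m Z
    rw [← nsmul_eq_mul, map_nsmul, nsmul_eq_mul]
  have m2 := hmul 2
  have m4 := hmul 4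
  have m8 := hmul 8
  have m16 := hmul 16
  have m32 := hmul 32
  have m64 := hmul 64
  push_cast at m2 m4 m8 m16 m32 m64
  rw [hexp]
  simp only [map_add, map_sub _ (_ : ℤ⟦X⟧), z6, m2, m4, m8, m16, m32, m64, z0, z1, z2, z3, z4, z5]
  simp only [mul_zero, sub_zero, add_zero, zero_add]
  exact Dvd.intro _ rfl

theorem overpartition_pow_four_8n_add_7 (n k : ℕ) :
    64 ∣ overpartition (4 ^ k * (8 * n + 7)) := by
  have h := coeff_dvd_of_inverse_theta n k _ (overpartition_series_mul (4 ^ k * (8 * n + 7) + 1))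
  rw [coeff_mk] at h
  exact_mod_cast h
end

section
/- Let ℓ be an odd prime and let r be a positive integer not divisible by ℓ. Then for every nonnegative integer n, the overpartition number satisfies p̄(ℓ²n + rℓ) ≡ 0 (mod 8). -/
open PowerSeries PowerSeries.WithPiTopology Finset Filter Topology

section FiniteIdentity

variable {R : Type*} [CommRing R]

/-- The consecutive differences of
`W s = (-1)^s q^(sn) ∏_{k < s} (1 + q^k) ∏_{s ≤ k < n} (1 - q^k)` sum to `W n`,
because `W 0` contains the factor `1 - q^0 = 0`. The summand is `W (s + 1) - W s`, with the
factors common to both pulled out. -/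
theorem shanks_telescope (q : R) (n : ℕ) (hn : 0 < n) :
    ∑ s ∈ range n, (-1) ^ s * q ^ (s * n) * (∏ k ∈ range s, (1 + q ^ k)) *
      (∏ k ∈ Ico (s + 1) n, (1 - q ^ k)) * ((1 - q ^ n) * q ^ s - (1 + q ^ n)) =
    (-1) ^ n * q ^ (n * n) * ∏ k ∈ range n, (1 + q ^ k) := by
  let W : ℕ → R := fun s ↦ (-1) ^ s * q ^ (s * n) * (∏ k ∈ range s, (1 + q ^ k)) *
    ∏ k ∈ Ico s n, (1 - q ^ k)
  have hW0 : W 0 = 0 := by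
    have : ∏ k ∈ Ico 0 n, (1 - q ^ k) = 0 :=
      prod_eq_zero (i := 0) (by simpa using hn) (by simp)
    simp only [W, this, mul_zero]
  have hWn : W n = (-1) ^ n * q ^ (n * n) * ∏ k ∈ range n, (1 + q ^ k) := by
    simp [W]
  rw [← hWn, ← sub_zero (W n), ← hW0, ← sum_range_sub]
  refine sum_congr rfl fun s hs ↦ ?_
  simp only [W]
  rw [prod_eq_prod_Ico_succ_bot (mem_range.mp hs), prod_range_succ]
  ring

/-- A finite form of Gauss's identity: the term `s = 0` on the left is `∏_{k ≤ n} (1 - q^k)`, and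
all the others are divisible by `q^(n+1)`. -/
theorem finite_gauss (q : R) (n : ℕ) :
    ∑ s ∈ range (n + 1), (-1) ^ s * q ^ (s * (n + 1)) * (∏ k ∈ range s, (1 + q ^ k)) *
      (∏ k ∈ Ico (s + 1) (n + 1), (1 - q ^ k)) =
    (∏ k ∈ range n, (1 + q ^ (k + 1))) *
      (1 + 2 * ∑ j ∈ range n, (-1) ^ (j + 1) * q ^ ((j + 1) ^ 2)) := by
  induction n with
  | zero => simp
  | succ n ih =>
    have htel := shanks_telescope q (n + 1) n.succ_pos
    -- the summand for `n + 1` is `(1 - q^(n+1)) q^s` times the summand for `n`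
    have hsplit : ∑ s ∈ range (n + 1), (-1) ^ s * q ^ (s * (n + 1 + 1)) *
          (∏ k ∈ range s, (1 + q ^ k)) * (∏ k ∈ Ico (s + 1) (n + 1 + 1), (1 - q ^ k)) =
        (1 + q ^ (n + 1)) * ∑ s ∈ range (n + 1), (-1) ^ s * q ^ (s * (n + 1)) *
          (∏ k ∈ range s, (1 + q ^ k)) * (∏ k ∈ Ico (s + 1) (n + 1), (1 - q ^ k)) +
        ∑ s ∈ range (n + 1), (-1) ^ s * q ^ (s * (n + 1)) * (∏ k ∈ range s, (1 + q ^ k)) *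
          (∏ k ∈ Ico (s + 1) (n + 1), (1 - q ^ k)) *
          ((1 - q ^ (n + 1)) * q ^ s - (1 + q ^ (n + 1))) := by
      rw [mul_sum, ← sum_add_distrib]
      refine sum_congr rfl fun s hs ↦ ?_
      rw [prod_Ico_succ_top (by simpa using hs)]
      ring
    -- `∏_{k < n + 1} (1 + q^k)` has the factor `1 + q^0 = 2`
    have htwo : ∏ k ∈ range (n + 1), (1 + q ^ k) = 2 * ∏ k ∈ range n, (1 + q ^ (k + 1)) := by
      rw [prod_range_succ']
      ring
    rw [sum_range_succ, hsplit, htel, ih, Ico_self, prod_empty, htwo,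
      prod_range_succ (fun k ↦ 1 + q ^ (k + 1)) n, sum_range_succ]
    ring

end FiniteIdentity

/-- The partial sums `∑_{1 ≤ j ≤ n} (-1)^j X^(j²)`, with `j` shifted by one. -/
noncomputable def halfThetaPartial (n : ℕ) : ℤ⟦X⟧ :=
  ∑ j ∈ range n, (-1) ^ (j + 1) * X ^ ((j + 1) ^ 2)

/-- The series `T = ∑_{j ≥ 1} (-1)^j X^(j²)`, so that `1 + 2T = ∑_{j ∈ ℤ} (-1)^j X^(j²)`. Its
coefficient at `m` is read off from the `m`-th partial sum, beyond which it no longer changes. -/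
noncomputable def halfTheta : ℤ⟦X⟧ :=
  PowerSeries.mk fun m ↦ coeff m (halfThetaPartial m)

theorem coeff_halfThetaPartial (m n : ℕ) :
    coeff m (halfThetaPartial n) =
      ∑ j ∈ range n, if m = (j + 1) ^ 2 then (-1) ^ (j + 1) else 0 := by
  rw [halfThetaPartial, map_sum]
  refine sum_congr rfl fun j _ ↦ ?_
  have : ((-1 : ℤ⟦X⟧) ^ (j + 1)) = C ((-1 : ℤ) ^ (j + 1)) := by simp
  rw [this, coeff_C_mul, coeff_X_pow]
  simp

theorem coeff_halfThetaPartial_of_le {m n : ℕ} (h : m ≤ n) :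
    coeff m (halfThetaPartial n) = coeff m halfTheta := by
  rw [halfTheta, coeff_mk, coeff_halfThetaPartial, coeff_halfThetaPartial]
  symm
  refine sum_subset (range_mono h) fun j _ hj ↦ if_neg ?_
  rw [mem_range, not_lt] at hj
  nlinarith

theorem coeff_halfTheta_of_not_isSquare {m : ℕ} (h : ¬ IsSquare m) : coeff m halfTheta = 0 := by
  rw [halfTheta, coeff_mk, coeff_halfThetaPartial]
  refine sum_eq_zero fun j _ ↦ if_neg ?_
  rintro rfl
  exact h (IsSquare.sq _)

section Limit

-- As `ℤ` is discrete, convergence of power series means that each coefficient is eventually constant.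

theorem tendsto_halfThetaPartial : Tendsto halfThetaPartial atTop (𝓝 halfTheta) := by
  rw [tendsto_iff_coeff_tendsto]
  exact fun m ↦ tendsto_atTop_of_eventually_const (i₀ := m)
    fun n hn ↦ coeff_halfThetaPartial_of_le hn

theorem hasProd_distincts :
    HasProd (fun i ↦ (1 + X ^ (i + 1) : ℤ⟦X⟧))
      (PowerSeries.mk fun n ↦ ((Nat.Partition.distincts n).card : ℤ)) := by
  simpa [sum_range_succ, Nat.Partition.countRestricted_two] using
    Nat.Partition.hasProd_powerSeriesMk_card_countRestricted ℤ (m := 2) (by norm_num)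

theorem mk_card_partition_mul_tprod :
    (PowerSeries.mk fun n ↦ (Fintype.card (Nat.Partition n) : ℤ)) *
      ∏' i : ℕ, (1 - X ^ (i + 1) : ℤ⟦X⟧) = 1 := by
  have h := Nat.Partition.hasProd_powerSeriesMk_card_restricted ℤ (fun _ ↦ True)
  have hmul := h.mul (multipliable_one_sub_X_pow ℤ).hasProd
  have hone (i : ℕ) : (∑' j : ℕ, (X : ℤ⟦X⟧) ^ ((i + 1) * j)) * (1 - X ^ (i + 1)) = 1 := by
    simp_rw [pow_mul]
    exact tsum_pow_mul_one_sub_of_constantCoeff_eq_zero (by simp)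
  simp only [if_true, hone] at hmul
  have := hmul.unique hasProd_one
  simpa [Nat.Partition.restricted, Finset.card_univ] using this

/-- The limit of `finite_gauss`:
`∏ (1 - X^k) = ∏ (1 + X^k) · ∑_{j ∈ ℤ} (-1)^j X^(j²)`. -/
theorem gauss_identity :
    ∏' i : ℕ, (1 - X ^ (i + 1) : ℤ⟦X⟧) =
      (PowerSeries.mk fun n ↦ ((Nat.Partition.distincts n).card : ℤ)) * (1 + 2 * halfTheta) := by
  have hQ := (multipliable_one_sub_X_pow ℤ).hasProd.tendsto_prod_nat
  have hR := hasProd_distincts.tendsto_prod_nat.mul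
    (tendsto_const_nhds (x := (1 : ℤ⟦X⟧)) |>.add
      (tendsto_halfThetaPartial.const_mul (2 : ℤ⟦X⟧)))
  refine tendsto_nhds_unique hQ ?_
  rw [tendsto_iff_coeff_tendsto] at hR ⊢
  intro m
  refine (hR m).congr' ?_
  filter_upwards [eventually_ge_atTop m] with n hn
  have hfin := finite_gauss (X : ℤ⟦X⟧) n
  rw [halfThetaPartial, ← hfin, sum_range_succ', map_add, map_sum, sum_eq_zero, zero_add]
  · simp [prod_Ico_eq_prod_range, add_comm]
  · intro s _
    have hdvd : (X : ℤ⟦X⟧) ^ (n + 1) ∣ (-1) ^ (s + 1) * X ^ ((s + 1) * (n + 1)) *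
        (∏ k ∈ range (s + 1), (1 + X ^ k)) *
        (∏ k ∈ Ico (s + 1 + 1) (n + 1), (1 - X ^ k)) :=
      (((pow_dvd_pow X (Nat.le_mul_of_pos_left _ s.succ_pos)).mul_left _).mul_right _).mul_right _
    exact X_pow_dvd_iff.mp hdvd m (Nat.lt_succ_of_le hn)

theorem mk_overpartition_mul_theta :
    (PowerSeries.mk fun n ↦ (overpartition n : ℤ)) * (1 + 2 * halfTheta) = 1 := by
  have hconv : (PowerSeries.mk fun n ↦ (overpartition n : ℤ)) =
      (PowerSeries.mk fun n ↦ ((Nat.Partition.distincts n).card : ℤ)) *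
        PowerSeries.mk fun n ↦ (Fintype.card (Nat.Partition n) : ℤ) := by
    ext n
    simp [coeff_mul, overpartition, Finset.Nat.sum_antidiagonal_eq_sum_range_succ_mk]
  have hP := mk_card_partition_mul_tprod
  rw [gauss_identity] at hP
  rw [hconv]
  linear_combination hP

end Limit

/-- Swapping the two factors pairs off the terms of the Cauchy product; a fixed term would need
`N = 2a` with `a` a square. -/
theorem even_coeff_halfTheta_sq {N : ℕ} (h : ∀ a, N ≠ 2 * a ^ 2) :
    Even (coeff N (halfTheta ^ 2)) := by
  rw [← ZMod.intCast_eq_zero_iff_even, sq, coeff_mul, Int.cast_sum]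
  refine sum_involution (fun p _ ↦ p.swap) ?_ ?_ ?_ ?_
  · intro p _
    rw [Prod.fst_swap, Prod.snd_swap, mul_comm (coeff p.2 halfTheta)]
    exact CharTwo.add_self_eq_zero _
  · rintro ⟨a, b⟩ hp hne heq
    obtain rfl : b = a := congrArg Prod.fst heq
    by_cases hb : IsSquare b
    · obtain ⟨c, rfl⟩ := hb
      rw [HasAntidiagonal.mem_antidiagonal] at hp
      exact h c (by rw [← hp]; ring)
    · simp [coeff_halfTheta_of_not_isSquare hb] at hne
  · simp [add_comm]
  · simp

theorem eight_dvd_overpartition {N : ℕ} (h₁ : ¬ IsSquare N) (h₂ : ∀ a, N ≠ 2 * a ^ 2) :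
    8 ∣ overpartition N := by
  set P : ℤ⟦X⟧ := PowerSeries.mk fun n ↦ (overpartition n : ℤ) with hP
  have hmul : P * (1 + 2 * halfTheta) = 1 := mk_overpartition_mul_theta
  have hexp : P = 1 + C (-2) * halfTheta + C 4 * halfTheta ^ 2 + C (-8) * (halfTheta ^ 3 * P) := by
    simp only [map_neg, map_ofNat]
    linear_combination (1 - 2 * halfTheta + 4 * halfTheta ^ 2) * hmul
  have hN : N ≠ 0 := by
    rintro rfl
    exact h₁ ⟨0, rfl⟩
  have hcoeff := congrArg (coeff N) hexp
  obtain ⟨c, hc⟩ := even_coeff_halfTheta_sq h₂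
  simp only [map_add, coeff_C_mul, coeff_halfTheta_of_not_isSquare h₁, hc, coeff_one, if_neg hN]
    at hcoeff
  rw [hP, coeff_mk] at hcoeff
  omega

theorem overpartition_ell_sq_mod_8 (ℓ : ℕ) (hℓ : ℓ.Prime) (hodd : Odd ℓ)
    (r : ℕ) (hr : 0 < r) (hndvd : ¬ ℓ ∣ r) (n : ℕ) :
    8 ∣ overpartition (ℓ ^ 2 * n + r * ℓ) := by
  have hdvd : ℓ ∣ ℓ ^ 2 * n + r * ℓ := ⟨ℓ * n + r, by ring⟩
  have hnsq : ¬ ℓ ^ 2 ∣ ℓ ^ 2 * n + r * ℓ := by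
    rw [Nat.dvd_add_right (Dvd.intro _ rfl), sq]
    exact fun h ↦ hndvd (Nat.dvd_of_mul_dvd_mul_right hℓ.pos h)
  apply eight_dvd_overpartition
  · rintro ⟨a, ha⟩
    rw [ha, ← sq] at hdvd hnsq
    exact hnsq (pow_dvd_pow_of_dvd (hℓ.dvd_of_dvd_pow hdvd) 2)
  · intro a ha
    rw [ha] at hdvd hnsq
    rcases hℓ.dvd_mul.mp hdvd with h | h
    · rw [(Nat.prime_dvd_prime_iff_eq hℓ Nat.prime_two).mp h] at hodd
      exact absurd hodd (by decide)
    · exact hnsq ((pow_dvd_pow_of_dvd (hℓ.dvd_of_dvd_pow h) 2).mul_left 2)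
end

section
/- Let ℓ be an odd prime and let r be an odd positive integer whose Legendre symbol satisfies (r/ℓ) = −1. Then for every nonnegative integer n, the overpartition number satisfies p̄(2ℓn + r) ≡ 0 (mod 8). -/
namespace OverpartitionModEight

open Finset PowerSeries PowerSeries.WithPiTopology

/-! ### A finite form of Gauss' identity -/

section Finite

variable {R : Type*} [CommRing R] (q : R)

/-- The product `∏_{s < k ≤ n} (1 - qᵏ) · ∏_{1 ≤ k ≤ s} (1 + qᵏ)`. -/
def mixedProd (n s : ℕ) : R :=
  (∏ k ∈ Ico s n, (1 - q ^ (k + 1))) * ∏ k ∈ range s, (1 + q ^ (k + 1))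

/-- The product `∏_{s + 1 < k ≤ n} (1 - qᵏ) · ∏_{1 ≤ k ≤ s} (1 + qᵏ)`: the factor of index `s + 1`
is left out. -/
def gapProd (n s : ℕ) : R :=
  (∏ k ∈ Ico (s + 1) n, (1 - q ^ (k + 1))) * ∏ k ∈ range s, (1 + q ^ (k + 1))

lemma gapProd_mul_add (n s : ℕ) :
    gapProd q n s * (1 + q ^ (s + 1)) = mixedProd q n (s + 1) := by
  rw [gapProd, mixedProd, prod_range_succ]; ring

lemma gapProd_mul_sub {n s : ℕ} (h : s < n) :
    gapProd q n s * (1 - q ^ (s + 1)) = mixedProd q n s := by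
  rw [gapProd, mixedProd, prod_eq_prod_Ico_succ_bot h]; ring

lemma gapProd_succ {n s : ℕ} (h : s < n) :
    gapProd q (n + 1) s = gapProd q n s * (1 - q ^ (n + 1)) := by
  rw [gapProd, gapProd, prod_Ico_succ_top (by omega)]; ring

lemma gapProd_succ_self (n : ℕ) :
    gapProd q (n + 1) n = ∏ k ∈ range n, (1 + q ^ (k + 1)) := by
  simp [gapProd]

lemma shanks_telescope (n j : ℕ) (hj : j ≤ n) :
    ∑ s ∈ range j, (-1) ^ (s + 1) * (q ^ ((s + 1) * (n + 2)) * gapProd q (n + 1) s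
        - (1 + q ^ (n + 1)) * (q ^ ((s + 1) * (n + 1)) * gapProd q n s))
      = q ^ (n + 1) * mixedProd q n 0 - (-1) ^ j * q ^ ((j + 1) * (n + 1)) * mixedProd q n j := by
  induction j with
  | zero => simp
  | succ j ih =>
    rw [sum_range_succ, ih (by omega), gapProd_succ q (by omega), ← gapProd_mul_add,
      ← gapProd_mul_sub q (show j < n by omega)]
    ring

lemma gauss_finite (n : ℕ) :
    (∏ k ∈ range n, (1 + q ^ (k + 1))) *
        (1 + 2 * ∑ s ∈ range n, (-1) ^ (s + 1) * q ^ ((s + 1) ^ 2))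
      = ∏ k ∈ range n, (1 - q ^ (k + 1))
        + 2 * ∑ s ∈ range n, (-1) ^ (s + 1) * (q ^ ((s + 1) * (n + 1)) * gapProd q n s) := by
  induction n with
  | zero => simp
  | succ n ih =>
    have h := shanks_telescope q n n le_rfl
    simp only [mul_sub, sum_sub_distrib] at h
    simp only [mul_left_comm _ (1 + q ^ (n + 1)), ← mul_sum] at h
    have h0 : mixedProd q n 0 = ∏ k ∈ range n, (1 - q ^ (k + 1)) := by
      simp [mixedProd, Nat.Ico_zero_eq_range]
    have h1 : mixedProd q n n = ∏ k ∈ range n, (1 + q ^ (k + 1)) := by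
      simp [mixedProd]
    rw [h0, h1] at h
    rw [sum_range_succ, sum_range_succ, prod_range_succ, prod_range_succ, gapProd_succ_self,
      show n + 1 + 1 = n + 2 from rfl]
    linear_combination (1 + q ^ (n + 1)) * ih - 2 * h

end Finite

/-! ### Passage to power series -/

/-- The series `θ = ∑_{s ≥ 1} (-1)ˢ q^(s²)`. The sign is written `(-1) ^ m` with `m = s²`, which has
the parity of `s`. -/
noncomputable def theta : ℤ⟦X⟧ :=
  PowerSeries.mk fun m => if 0 < m ∧ IsSquare m then (-1) ^ m else 0

lemma dvd_theta_sub (n : ℕ) :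
    (X : ℤ⟦X⟧) ^ (n + 1) ∣ theta - ∑ s ∈ range n, (-1) ^ (s + 1) * X ^ ((s + 1) ^ 2) := by
  rw [X_pow_dvd_iff]
  intro d hd
  have hc : ∀ s : ℕ, coeff d ((-1 : ℤ⟦X⟧) ^ (s + 1) * X ^ ((s + 1) ^ 2))
      = if d = (s + 1) ^ 2 then (-1) ^ (s + 1) else 0 := by
    intro s
    have : (-1 : ℤ⟦X⟧) ^ (s + 1) = C ((-1 : ℤ) ^ (s + 1)) := by simp
    rw [this, coeff_C_mul, coeff_X_pow]
    simp
  simp only [map_sub, map_sum, hc, theta, coeff_mk]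
  split_ifs with h
  · obtain ⟨h0, t, rfl⟩ := h
    obtain ⟨t, rfl⟩ : ∃ u, t = u + 1 := Nat.exists_eq_succ_of_ne_zero (by rintro rfl; simp at h0)
    rw [sum_eq_single t]
    · rw [if_pos (by ring), pow_mul]
      rcases Nat.even_or_odd (t + 1) with e | e <;> rw [e.neg_one_pow]
      · simp
      · rw [e.neg_one_pow, sub_self]
    · intro s _ hs
      rw [if_neg]
      intro h
      rw [← sq] at h
      have := Nat.pow_left_injective (n := 2) (by norm_num) h
      omega
    · intro ht
      rw [mem_range] at ht
      nlinarith
  · rw [sum_eq_zero, sub_zero]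
    intro s _
    rw [if_neg]
    rintro rfl
    exact h ⟨by positivity, ⟨s + 1, by ring⟩⟩

lemma dvd_hasProd_sub {f : ℕ → ℤ⟦X⟧} {F : ℤ⟦X⟧} (h : HasProd f F)
    (hf : ∀ i, X ^ (i + 1) ∣ f i - 1) (n : ℕ) :
    X ^ (n + 1) ∣ F - ∏ i ∈ range n, f i := by
  have key : ∀ m, n ≤ m → X ^ (n + 1) ∣ (∏ i ∈ range m, f i) - ∏ i ∈ range n, f i := by
    intro m hm
    induction m, hm using Nat.le_induction with
    | base => simp
    | succ m hm ih =>
      rw [prod_range_succ]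
      have h1 : X ^ (n + 1) ∣ (∏ i ∈ range m, f i) * (f m - 1) :=
        ((pow_dvd_pow X (by omega)).trans (hf m)).mul_left _
      convert dvd_add ih h1 using 1
      ring
  rw [X_pow_dvd_iff]
  intro d hd
  have ht := (tendsto_iff_coeff_tendsto (R := ℤ) _ _ _).1 h.tendsto_prod_nat d
  have hconst : Filter.Tendsto (fun m => coeff d (∏ i ∈ range m, f i)) Filter.atTop
      (nhds (coeff d (∏ i ∈ range n, f i))) := by
    refine tendsto_atTop_of_eventually_const (i₀ := n) fun m hm => ?_
    have := X_pow_dvd_iff.1 (key m hm) d hd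
    rwa [map_sub, sub_eq_zero] at this
  rw [map_sub, sub_eq_zero]
  exact tendsto_nhds_unique ht hconst

/-- The generating function of partitions into distinct parts. -/
noncomputable def distinctSeries : ℤ⟦X⟧ :=
  PowerSeries.mk fun n => ((Nat.Partition.distincts n).card : ℤ)

/-- The generating function of all partitions. -/
noncomputable def partitionSeries : ℤ⟦X⟧ :=
  PowerSeries.mk fun n => (Fintype.card (Nat.Partition n) : ℤ)

/-- The generating function of overpartitions. -/
noncomputable def overSeries : ℤ⟦X⟧ :=
  PowerSeries.mk fun n => (overpartition n : ℤ)

lemma overSeries_eq : overSeries = distinctSeries * partitionSeries := by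
  ext n
  rw [coeff_mul, Nat.sum_antidiagonal_eq_sum_range_succ_mk]
  simp [overSeries, distinctSeries, partitionSeries, overpartition]

lemma hasProd_distinctSeries : HasProd (fun i => (1 + X ^ (i + 1) : ℤ⟦X⟧)) distinctSeries := by
  have h := Nat.Partition.hasProd_powerSeriesMk_card_countRestricted ℤ (m := 2) (by norm_num)
  simpa [Nat.Partition.countRestricted_two, sum_range_succ, distinctSeries] using h

/-- Euler's product `∏ (1 - qⁱ)` is inverse to the partition generating function. It enters as
`pentagonalSeries`, but only through its product expansion. -/
lemma partitionSeries_mul : partitionSeries * pentagonalSeries ℤ = 1 := by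
  have h := Nat.Partition.hasProd_powerSeriesMk_card_restricted ℤ (fun _ => True)
  have h' := h.mul (hasProd_one_sub_X_pow ℤ)
  have e : (PowerSeries.mk fun n => (#(Nat.Partition.restricted n fun _ => True) : ℤ))
      = partitionSeries := by
    ext n; simp [partitionSeries, Nat.Partition.restricted]
  rw [e] at h'
  refine h'.unique ?_
  have h1 : (fun i : ℕ => (if True then ∑' j : ℕ, (X : ℤ⟦X⟧) ^ ((i + 1) * j) else 1)
      * (1 - X ^ (i + 1))) = fun _ => 1 := by
    funext i
    rw [if_pos trivial]
    simp only [pow_mul]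
    exact tsum_pow_mul_one_sub_of_constantCoeff_eq_zero (by simp)
  rw [h1]
  exact hasProd_one

/-- Gauss' identity `∏ (1 + qⁱ) · (1 + 2θ) = ∏ (1 - qⁱ)`. -/
lemma gauss : distinctSeries * (1 + 2 * theta) = pentagonalSeries ℤ := by
  rw [← sub_eq_zero]
  ext d
  -- Truncating all three series at order `d + 1` reduces this to `gauss_finite`.
  have hD := dvd_hasProd_sub hasProd_distinctSeries (fun i => by simp) d
  have hA := dvd_hasProd_sub (hasProd_one_sub_X_pow ℤ) (fun i => by simp) d
  have hT := dvd_theta_sub d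
  have hG := gauss_finite (X : ℤ⟦X⟧) d
  have hE : (X : ℤ⟦X⟧) ^ (d + 1) ∣
      ∑ s ∈ range d, (-1) ^ (s + 1) * (X ^ ((s + 1) * (d + 1)) * gapProd X d s) :=
    dvd_sum fun s _ => ((pow_dvd_pow X (Nat.le_mul_of_pos_left _ s.succ_pos)).mul_right _).mul_left _
  refine X_pow_dvd_iff.1 ?_ d d.lt_succ_self
  convert dvd_add (dvd_sub (hD.mul_right (1 + 2 * theta)) hA)
    (dvd_add (hT.mul_left (2 * ∏ i ∈ range d, (1 + X ^ (i + 1)))) (hE.mul_left 2)) using 1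
  linear_combination hG

lemma overSeries_mul : overSeries * (1 + 2 * theta) = 1 := by
  rw [overSeries_eq]
  linear_combination partitionSeries * gauss + partitionSeries_mul

/-! ### The congruence -/

lemma even_coeff_theta_sq {N : ℕ} (hN : Odd N) : 2 ∣ coeff N (theta ^ 2) := by
  -- Modulo 2 the antidiagonal sum cancels in pairs under the swap, which has no fixed point.
  rw [← Nat.cast_two (R := ℤ), ← ZMod.intCast_zmod_eq_zero_iff_dvd _ 2, sq, coeff_mul, Int.cast_sum]
  refine sum_involution (fun p _ => p.swap) ?_ ?_ ?_ ?_
  · intro p _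
    rw [Prod.fst_swap, Prod.snd_swap, mul_comm (coeff p.2 theta)]
    exact CharTwo.add_self_eq_zero _
  · intro p hp _ h
    rw [HasAntidiagonal.mem_antidiagonal] at hp
    have : p.2 = p.1 := congrArg Prod.fst h
    rw [← hp, this] at hN
    exact (Nat.not_odd_iff_even.2 ⟨_, rfl⟩) hN
  · intro p hp
    rwa [HasAntidiagonal.mem_antidiagonal, Prod.fst_swap, Prod.snd_swap, add_comm,
      ← HasAntidiagonal.mem_antidiagonal]
  · intro p _
    exact p.swap_swap

theorem eight_dvd_of_odd_of_not_isSquare {N : ℕ} (hN : Odd N) (hsq : ¬ IsSquare N) :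
    8 ∣ overpartition N := by
  have h : overSeries =
      1 - C 2 * theta + C 4 * theta ^ 2 - C 8 * (theta ^ 3 * overSeries) := by
    rw [show (C 2 : ℤ⟦X⟧) = 2 from rfl, show (C 4 : ℤ⟦X⟧) = 4 from rfl,
      show (C 8 : ℤ⟦X⟧) = 8 from rfl]
    linear_combination (1 - 2 * theta + 4 * theta ^ 2) * overSeries_mul
  have hc := congrArg (coeff N) h
  have h0 : coeff N theta = 0 := by simp [theta, hsq]
  have h1 : coeff N (1 : ℤ⟦X⟧) = 0 := by rw [coeff_one, if_neg hN.pos.ne']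
  obtain ⟨c, hc2⟩ := even_coeff_theta_sq hN
  rw [map_sub, map_add, map_sub, coeff_C_mul, coeff_C_mul, coeff_C_mul, h0, h1, hc2, overSeries,
    coeff_mk, ← overSeries] at hc
  zify
  rw [hc]
  exact ⟨c - coeff N (theta ^ 3 * overSeries), by ring⟩

end OverpartitionModEight

theorem overpartition_two_ell_mod_8 (ℓ : ℕ) [Fact ℓ.Prime] (hodd : Odd ℓ)
    (r : ℕ) (hr : 0 < r) (hrodd : Odd r) (hleg : legendreSym ℓ (r : ℤ) = -1) (n : ℕ) :
    8 ∣ overpartition (2 * ℓ * n + r) := by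
  refine OverpartitionModEight.eight_dvd_of_odd_of_not_isSquare ?_ ?_
  · rw [mul_assoc]
    exact (even_two_mul _).add_odd hrodd
  · intro h
    refine (legendreSym.eq_neg_one_iff' ℓ).1 hleg ?_
    simpa using h.map (Nat.castRingHom (ZMod ℓ))
end
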